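/- A continuous surjection f : X → Y of compact Hausdorff spaces is fully closed if and only if for every continuous map g : X → K into a compact metric space K and every ε > 0 the set H_{g,ε} = {y ∈ Y : diam(g(f⁻¹(y))) ≥ ε} is finite. -/

import Mathlib

open Set Metric Topology Filter

/-- A continuous map of compacts is fully closed if images of disjoint closed sets
have finite intersection. -/
def FullyClosed {X Y : Type*} [TopologicalSpace X] [TopologicalSpace Y] (f : X → Y) : Prop :=
  ∀ A B : Set X, IsClosed A → IsClosed B → Disjoint A B → (f '' A ∩ f '' B).Finite

/-!
In a totally bounded space, finitely many pairs of disjoint closed balls separate all pairs of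
points at distance more than `r`. Pulling these pairs back along `g`, every fiber of `f` on which
`g` oscillates by more than `r` meets both members of one of finitely many pairs of disjoint closed
sets, so full closedness leaves only finitely many such fibers. Conversely, a Urysohn function
separating `A` from `B` oscillates by `1` on each fiber over `f '' A ∩ f '' B`.
-/

section PseudoMetricSpace

variable {K : Type*} [PseudoMetricSpace K] {s : Set K} {r : ℝ}

theorem exists_lt_dist_of_lt_diam (hr : 0 ≤ r) (h : r < diam s) :
    ∃ x ∈ s, ∃ y ∈ s, r < dist x y := by
  contrapose! h
  exact diam_le_of_forall_dist_le hr h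

theorem exists_finite_disjoint_isClosed_pairs (hs : TotallyBounded s) (hr : 0 < r) :
    ∃ P : Set (Set K × Set K), P.Finite ∧
      (∀ p ∈ P, IsClosed p.1 ∧ IsClosed p.2 ∧ Disjoint p.1 p.2) ∧
      ∀ x ∈ s, ∀ y ∈ s, r < dist x y → ∃ p ∈ P, x ∈ p.1 ∧ y ∈ p.2 := by
  obtain ⟨t, ht, hst⟩ := totallyBounded_iff.1 hs (r / 4) (by positivity)
  let ballPair (c : K × K) : Set K × Set K := (closedBall c.1 (r / 4), closedBall c.2 (r / 4))
  refine ⟨ballPair '' {c ∈ t ×ˢ t | r / 2 < dist c.1 c.2},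
    ((ht.prod ht).subset (sep_subset _ _)).image _, ?_, fun x hx y hy hxy ↦ ?_⟩
  · rintro _ ⟨c, ⟨-, hc⟩, rfl⟩
    exact ⟨isClosed_closedBall, isClosed_closedBall, closedBall_disjoint_closedBall (by linarith)⟩
  · obtain ⟨c, hc, hxc : dist x c < r / 4⟩ := mem_iUnion₂.1 (hst hx)
    obtain ⟨d, hd, hyd : dist y d < r / 4⟩ := mem_iUnion₂.1 (hst hy)
    have hcd : r / 2 < dist c d := by
      linarith [dist_triangle4 x c d y, dist_comm d y]
    exact ⟨_, ⟨(c, d), ⟨⟨hc, hd⟩, hcd⟩, rfl⟩, hxc.le, hyd.le⟩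

end PseudoMetricSpace

section FullyClosed

variable {X Y : Type*} [TopologicalSpace X] [TopologicalSpace Y] {f : X → Y}

section TotallyBounded

variable {K : Type*} [PseudoMetricSpace K] {g : X → K} {r : ℝ}

theorem FullyClosed.finite_setOf_lt_dist (hf : FullyClosed f) (hg : Continuous g)
    (hK : TotallyBounded (range g)) (hr : 0 < r) :
    {y | ∃ a ∈ f ⁻¹' {y}, ∃ b ∈ f ⁻¹' {y}, r < dist (g a) (g b)}.Finite := by
  obtain ⟨P, hP, hclosed, hsep⟩ := exists_finite_disjoint_isClosed_pairs hK hr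
  have hfin : (⋃ p ∈ P, f '' (g ⁻¹' p.1) ∩ f '' (g ⁻¹' p.2)).Finite :=
    hP.biUnion fun p hp ↦
      have ⟨h₁, h₂, hdisj⟩ := hclosed p hp
      hf _ _ (h₁.preimage hg) (h₂.preimage hg) (hdisj.preimage g)
  refine hfin.subset ?_
  rintro y ⟨a, ha, b, hb, hab⟩
  obtain ⟨p, hp, hap, hbp⟩ := hsep _ (mem_range_self a) _ (mem_range_self b) hab
  exact mem_biUnion hp ⟨⟨a, hap, ha⟩, ⟨b, hbp, hb⟩⟩

theorem FullyClosed.finite_setOf_le_diam (hf : FullyClosed f) (hg : Continuous g)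
    (hK : TotallyBounded (range g)) (hr : 0 < r) :
    {y | r ≤ diam (g '' (f ⁻¹' {y}))}.Finite := by
  refine (hf.finite_setOf_lt_dist hg hK (half_pos hr)).subset fun y hy ↦ ?_
  simpa only [mem_ofPred_eq, exists_mem_image] using
    exists_lt_dist_of_lt_diam (half_pos hr).le ((half_lt_self hr).trans_le hy)

end TotallyBounded

theorem fullyClosed_of_finite_setOf_one_le_diam [NormalSpace X]
    (h : ∀ u : C(X, unitInterval), {y | 1 ≤ diam (u '' (f ⁻¹' {y}))}.Finite) :
    FullyClosed f := by
  intro A B hA hB hAB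
  obtain ⟨u, hu₀, hu₁, hu⟩ := exists_continuous_zero_one_of_isClosed hA hB hAB
  let v : C(X, unitInterval) := ⟨fun x ↦ ⟨u x, hu x⟩, u.continuous.subtype_mk hu⟩
  refine (h v).subset ?_
  rintro y ⟨⟨a, ha, hay⟩, ⟨b, hb, hby⟩⟩
  calc
    1 = dist (u a) (u b) := by simp [hu₀ ha, hu₁ hb]
    _ = dist (v a) (v b) := rfl
    _ ≤ diam (v '' (f ⁻¹' {y})) :=
      dist_le_diam_of_mem isBounded_of_compactSpace
        (mem_image_of_mem v hay) (mem_image_of_mem v hby)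

end FullyClosed

theorem fullyClosed_iff_finite_large_oscillation_general.{u}
    {X Y : Type*} [TopologicalSpace X] [NormalSpace X] [TopologicalSpace Y] (f : X → Y) :
    FullyClosed f ↔
      ∀ (K : Type u) [MetricSpace K] [CompactSpace K] (g : X → K), Continuous g →
        ∀ ε : ℝ, 0 < ε → {y : Y | ε ≤ Metric.diam (g '' (f ⁻¹' {y}))}.Finite := by
  refine ⟨fun hf K _ _ g hg ε hε ↦
    hf.finite_setOf_le_diam hg (isCompact_univ.totallyBounded.subset (subset_univ _)) hε,
    fun h ↦ fullyClosed_of_finite_setOf_one_le_diam fun u ↦ ?_⟩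
  have up_isometry : Isometry (ULift.up.{u} : unitInterval → ULift unitInterval) :=
    Isometry.of_dist_eq fun _ _ ↦ rfl
  simpa only [image_comp, up_isometry.diam_image] using
    h _ (ULift.up ∘ u) (up_isometry.continuous.comp u.continuous) 1 one_pos

/-- Proposition 3.1: `f` is fully closed iff for every continuous map `g`
into a compact metric space and every `ε > 0` the set of points whose fiber has
`g`-image of diameter at least `ε` is finite. -/
theorem fullyClosed_iff_finite_large_oscillation.{u}
    {X Y : Type*} [TopologicalSpace X] [CompactSpace X] [T2Space X]
    [TopologicalSpace Y] [CompactSpace Y] [T2Space Y]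
    (f : X → Y) (hf : Continuous f) (hsurj : Function.Surjective f) :
    FullyClosed f ↔
      ∀ (K : Type u) [MetricSpace K] [CompactSpace K] (g : X → K), Continuous g →
        ∀ ε : ℝ, 0 < ε → {y : Y | ε ≤ Metric.diam (g '' (f ⁻¹' {y}))}.Finite :=
  fullyClosed_iff_finite_large_oscillation_general f
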